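/- Let F be the Minkowskian product of Finsler metrics F₁ and F₂ with respect to a product function f. Then at every point (x,y) = ((x₁,x₂),(y₁,y₂)) with y₁ ≠ 0 and y₂ ≠ 0, the mean Landsberg curvature J_α = 2·G^{βγ}·L_{αβγ} of F satisfies: J_i(x,y) = J¹_i(x₁,y₁) for every index i in the first block, and J_{i'}(x,y) = J²_{i'}(x₂,y₂) for every index i' in the second block, where J¹ and J² are the mean Landsberg curvatures of F₁ and F₂. -/

import Mathlib

open Matrix

/-- Partial derivative in the fiber variable `y` in the direction of the `α`-th
coordinate, for a function `g (x, y)` of a base point and a fiber vector. -/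
noncomputable def pdy {ι : Type*} [Fintype ι] [DecidableEq ι]
    (g : (ι → ℝ) → (ι → ℝ) → ℝ) (α : ι) : (ι → ℝ) → (ι → ℝ) → ℝ :=
  fun x y => fderiv ℝ (g x) y (Pi.single α 1)

/-- Partial derivative in the base variable `x` in the direction of the `γ`-th
coordinate, for a function `g (x, y)` of a base point and a fiber vector. -/
noncomputable def pdx {ι : Type*} [Fintype ι] [DecidableEq ι]
    (g : (ι → ℝ) → (ι → ℝ) → ℝ) (γ : ι) : (ι → ℝ) → (ι → ℝ) → ℝ :=
  fun x y => fderiv ℝ (fun x' => g x' y) x (Pi.single γ 1)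

/-- The fundamental tensor `(G_{αβ}) = (∂²(F²)/∂y^α∂y^β)` of a Finsler metric `F`. -/
noncomputable def fundTensor {ι : Type*} [Fintype ι] [DecidableEq ι]
    (F : (ι → ℝ) → (ι → ℝ) → ℝ) (x y : ι → ℝ) : Matrix ι ι ℝ :=
  fun α β => pdy (pdy (fun x' y' => (F x' y') ^ 2) β) α x y

/-- `F` is a Finsler metric on the open set `U`: `G = F²` is smooth on the slit
domain, `F` is positive for `y ≠ 0`, absolutely 1-homogeneous in `y`, and its
fundamental tensor is positive definite for `y ≠ 0`. -/
structure IsFinslerMetric {ι : Type*} [Fintype ι] [DecidableEq ι]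
    (U : Set (ι → ℝ)) (F : (ι → ℝ) → (ι → ℝ) → ℝ) : Prop where
  isOpen : IsOpen U
  smooth : ContDiffOn ℝ (⊤ : ℕ∞) (fun p : (ι → ℝ) × (ι → ℝ) => (F p.1 p.2) ^ 2)
    (U ×ˢ {y | y ≠ 0})
  pos : ∀ x ∈ U, ∀ y : ι → ℝ, y ≠ 0 → 0 < F x y
  homog : ∀ x ∈ U, ∀ (y : ι → ℝ) (c : ℝ), F x (c • y) = |c| * F x y
  posDef : ∀ x ∈ U, ∀ y : ι → ℝ, y ≠ 0 → (fundTensor F x y).PosDef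

/-- The geodesic spray coefficients
`𝔾^α = ½ G^{αβ}(∂²G/∂y^β∂x^γ · y^γ − ∂G/∂x^β)` of a Finsler metric `F`. -/
noncomputable def spray {ι : Type*} [Fintype ι] [DecidableEq ι]
    (F : (ι → ℝ) → (ι → ℝ) → ℝ) (α : ι) : (ι → ℝ) → (ι → ℝ) → ℝ :=
  fun x y => (1 / 2) * ∑ β, (fundTensor F x y)⁻¹ α β *
    ((∑ γ, pdx (pdy (fun x' y' => (F x' y') ^ 2) β) γ x y * y γ) -
      pdx (fun x' y' => (F x' y') ^ 2) β x y)

/-- The Cartan nonlinear connection coefficients `Γ^α_β = ∂𝔾^α/∂y^β`. -/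
noncomputable def nonlinConn {ι : Type*} [Fintype ι] [DecidableEq ι]
    (F : (ι → ℝ) → (ι → ℝ) → ℝ) (α β : ι) : (ι → ℝ) → (ι → ℝ) → ℝ :=
  pdy (spray F α) β

/-- The Berwald connection coefficients `Γ̌^α_{β;γ} = ∂Γ^α_γ/∂y^β = ∂²𝔾^α/∂y^β∂y^γ`. -/
noncomputable def berwaldConn {ι : Type*} [Fintype ι] [DecidableEq ι]
    (F : (ι → ℝ) → (ι → ℝ) → ℝ) (α β γ : ι) : (ι → ℝ) → (ι → ℝ) → ℝ :=
  pdy (nonlinConn F α γ) β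

/-- The Berwald curvature `B^α_{βγη} = ∂³𝔾^α/∂y^β∂y^γ∂y^η`. -/
noncomputable def berwaldCurv {ι : Type*} [Fintype ι] [DecidableEq ι]
    (F : (ι → ℝ) → (ι → ℝ) → ℝ) (α β γ η : ι) : (ι → ℝ) → (ι → ℝ) → ℝ :=
  pdy (pdy (pdy (spray F α) η) γ) β

/-- The mean Berwald curvature `E_{βγ} = ½ B^α_{βγα}` (sum over `α`). -/
noncomputable def meanBerwaldCurv {ι : Type*} [Fintype ι] [DecidableEq ι]
    (F : (ι → ℝ) → (ι → ℝ) → ℝ) (β γ : ι) : (ι → ℝ) → (ι → ℝ) → ℝ :=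
  fun x y => (1 / 2) * ∑ α, berwaldCurv F α β γ α x y

/-- The Landsberg curvature `L_{βγη} = −¼ y^ν G_{να} B^α_{βγη}` (sums over `ν, α`). -/
noncomputable def landsbergCurv {ι : Type*} [Fintype ι] [DecidableEq ι]
    (F : (ι → ℝ) → (ι → ℝ) → ℝ) (β γ η : ι) : (ι → ℝ) → (ι → ℝ) → ℝ :=
  fun x y => -(1 / 4) * ∑ ν, ∑ α, y ν * fundTensor F x y ν α * berwaldCurv F α β γ η x y

/-- The mean Landsberg curvature `J_α = 2 G^{βγ} L_{αβγ}` (sums over `β, γ`). -/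
noncomputable def meanLandsbergCurv {ι : Type*} [Fintype ι] [DecidableEq ι]
    (F : (ι → ℝ) → (ι → ℝ) → ℝ) (α : ι) : (ι → ℝ) → (ι → ℝ) → ℝ :=
  fun x y => 2 * ∑ β, ∑ γ, (fundTensor F x y)⁻¹ β γ * landsbergCurv F α β γ x y

/-- Partial derivative of `f : ℝ → ℝ → ℝ` with respect to the first variable. -/
noncomputable def pderivS (f : ℝ → ℝ → ℝ) (s t : ℝ) : ℝ := deriv (fun u => f u t) s

/-- Partial derivative of `f : ℝ → ℝ → ℝ` with respect to the second variable. -/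
noncomputable def pderivT (f : ℝ → ℝ → ℝ) (s t : ℝ) : ℝ := deriv (fun v => f s v) t

/-- `f_st = ∂²f/∂s∂t`. -/
noncomputable def pderivST (f : ℝ → ℝ → ℝ) (s t : ℝ) : ℝ :=
  deriv (fun u => pderivT f u t) s

/-- The data of a Minkowskian product: `F₁, F₂` are Finsler metrics on `U₁, U₂`,
`f` is an admissible product function, and `F = √(f(F₁², F₂²))` is the Minkowskian
product metric, itself assumed to be a Finsler metric on `U₁ × U₂`. -/
structure IsMinkowskianProduct {m n : ℕ}
    (U₁ : Set (Fin m → ℝ)) (U₂ : Set (Fin n → ℝ))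
    (F₁ : (Fin m → ℝ) → (Fin m → ℝ) → ℝ) (F₂ : (Fin n → ℝ) → (Fin n → ℝ) → ℝ)
    (f : ℝ → ℝ → ℝ)
    (F : (Fin m ⊕ Fin n → ℝ) → (Fin m ⊕ Fin n → ℝ) → ℝ) : Prop where
  finsler₁ : IsFinslerMetric U₁ F₁
  finsler₂ : IsFinslerMetric U₂ F₂
  f_cont : ContinuousOn (fun p : ℝ × ℝ => f p.1 p.2) (Set.Ici 0 ×ˢ Set.Ici 0)
  f_nonneg : ∀ s ∈ Set.Ici (0 : ℝ), ∀ t ∈ Set.Ici (0 : ℝ), 0 ≤ f s t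
  f_zero_iff : ∀ s ∈ Set.Ici (0 : ℝ), ∀ t ∈ Set.Ici (0 : ℝ),
    (f s t = 0 ↔ s = 0 ∧ t = 0)
  f_homog : ∀ c ∈ Set.Ici (0 : ℝ), ∀ s ∈ Set.Ici (0 : ℝ), ∀ t ∈ Set.Ici (0 : ℝ),
    f (c * s) (c * t) = c * f s t
  f_smooth : ContDiffOn ℝ (⊤ : ℕ∞) (fun p : ℝ × ℝ => f p.1 p.2)
    (Set.Ioi 0 ×ˢ Set.Ioi 0)
  fs_ne : ∀ s > (0 : ℝ), ∀ t > (0 : ℝ), pderivS f s t ≠ 0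
  ft_ne : ∀ s > (0 : ℝ), ∀ t > (0 : ℝ), pderivT f s t ≠ 0
  delta_ne : ∀ s > (0 : ℝ), ∀ t > (0 : ℝ),
    pderivS f s t * pderivT f s t - 2 * f s t * pderivST f s t ≠ 0
  F_def : ∀ (x y : Fin m ⊕ Fin n → ℝ),
    F x y = Real.sqrt (f ((F₁ (x ∘ Sum.inl) (y ∘ Sum.inl)) ^ 2)
      ((F₂ (x ∘ Sum.inr) (y ∘ Sum.inr)) ^ 2))
  finsler : IsFinslerMetric
    {x : Fin m ⊕ Fin n → ℝ | (x ∘ Sum.inl) ∈ U₁ ∧ (x ∘ Sum.inr) ∈ U₂} F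

/-! ### Smooth functions of `(x, y)` and their partial derivatives -/

/-- Joint smoothness on a set `W` of pairs `(x, y)`. -/
def SmOn {ι : Type*} [Fintype ι] (W : Set ((ι → ℝ) × (ι → ℝ)))
    (g : (ι → ℝ) → (ι → ℝ) → ℝ) : Prop :=
  ContDiffOn ℝ (⊤ : ℕ∞) (fun p : (ι → ℝ) × (ι → ℝ) => g p.1 p.2) W

section general

set_option linter.unusedSectionVars false

variable {ι : Type*} [Fintype ι] [DecidableEq ι] {W : Set ((ι → ℝ) × (ι → ℝ))}
  {g h : (ι → ℝ) → (ι → ℝ) → ℝ}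

theorem SmOn.differentiableAt (hW : IsOpen W) (hg : SmOn W g) {x y : ι → ℝ} (hp : (x, y) ∈ W) :
    DifferentiableAt ℝ (fun p : (ι → ℝ) × (ι → ℝ) => g p.1 p.2) (x, y) :=
  (hg.contDiffAt (hW.mem_nhds hp)).differentiableAt (by simp)

theorem SmOn.hasFDerivAt_y (hW : IsOpen W) (hg : SmOn W g) {x y : ι → ℝ} (hp : (x, y) ∈ W) :
    HasFDerivAt (g x) ((fderiv ℝ (fun p : (ι → ℝ) × (ι → ℝ) => g p.1 p.2) (x, y)).comp
      (ContinuousLinearMap.inr ℝ (ι → ℝ) (ι → ℝ))) y :=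
  (hg.differentiableAt hW hp).hasFDerivAt.comp y (hasFDerivAt_prodMk_right x y)

theorem SmOn.hasFDerivAt_x (hW : IsOpen W) (hg : SmOn W g) {x y : ι → ℝ} (hp : (x, y) ∈ W) :
    HasFDerivAt (fun x' => g x' y) ((fderiv ℝ (fun p : (ι → ℝ) × (ι → ℝ) => g p.1 p.2) (x, y)).comp
      (ContinuousLinearMap.inl ℝ (ι → ℝ) (ι → ℝ))) x :=
  HasFDerivAt.comp (f := fun x' => (x', y)) x (hg.differentiableAt hW hp).hasFDerivAt
    (hasFDerivAt_prodMk_left x y)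

theorem SmOn.pdy (hW : IsOpen W) (hg : SmOn W g) (α : ι) : SmOn W (pdy g α) := by
  have h1 : ContDiffOn ℝ (⊤ : ℕ∞) (fun q => fderiv ℝ (fun p : (ι → ℝ) × (ι → ℝ) => g p.1 p.2) q
      (0, Pi.single α 1)) W :=
    (hg.fderiv_of_isOpen hW (by simp)).clm_apply contDiffOn_const
  refine h1.congr ?_
  rintro ⟨x, y⟩ hp
  simp [_root_.pdy, (hg.hasFDerivAt_y hW hp).fderiv]

theorem SmOn.pdx (hW : IsOpen W) (hg : SmOn W g) (α : ι) : SmOn W (pdx g α) := by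
  have h1 : ContDiffOn ℝ (⊤ : ℕ∞) (fun q => fderiv ℝ (fun p : (ι → ℝ) × (ι → ℝ) => g p.1 p.2) q
      (Pi.single α 1, 0)) W :=
    (hg.fderiv_of_isOpen hW (by simp)).clm_apply contDiffOn_const
  refine h1.congr ?_
  rintro ⟨x, y⟩ hp
  simp [_root_.pdx, (hg.hasFDerivAt_x hW hp).fderiv]

theorem pdy_congr (hW : IsOpen W) (hgh : ∀ x y, (x, y) ∈ W → g x y = h x y) (α : ι) :
    ∀ x y, (x, y) ∈ W → pdy g α x y = pdy h α x y := by
  intro x y hp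
  have : g x =ᶠ[nhds y] h x := by
    have : Filter.Tendsto (fun y' => (x, y')) (nhds y) (nhds (x, y)) :=
      (Continuous.prodMk_right x).tendsto y
    filter_upwards [this.eventually (hW.mem_nhds hp)] with y' hy' using hgh _ _ hy'
  simp only [pdy, this.fderiv_eq]

theorem pdx_congr (hW : IsOpen W) (hgh : ∀ x y, (x, y) ∈ W → g x y = h x y) (α : ι) :
    ∀ x y, (x, y) ∈ W → pdx g α x y = pdx h α x y := by
  intro x y hp
  have : (fun x' => g x' y) =ᶠ[nhds x] (fun x' => h x' y) := by
    have : Filter.Tendsto (fun x' => (x', y)) (nhds x) (nhds (x, y)) :=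
      (Continuous.prodMk_left y).tendsto x
    filter_upwards [this.eventually (hW.mem_nhds hp)] with y' hy' using hgh _ _ hy'
  simp only [pdx, this.fderiv_eq]

theorem pdy_pdy_symm (hW : IsOpen W) (hg : SmOn W g) (α β : ι) :
    ∀ x y, (x, y) ∈ W → pdy (pdy g α) β x y = pdy (pdy g β) α x y := by
  intro x y hp
  have hc : ContDiffAt ℝ (⊤ : ℕ∞) (g x) y :=
    (hg.contDiffAt (hW.mem_nhds hp)).comp y (f := fun y' => (x, y')) (by fun_prop)
  have hs : IsSymmSndFDerivAt ℝ (g x) y := hc.isSymmSndFDerivAt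
    (by simpa using WithTop.coe_le_coe.2 (le_top : (2 : ℕ∞) ≤ ⊤))
  have hd : DifferentiableAt ℝ (fderiv ℝ (g x)) y :=
    (hc.fderiv_right (m := 1) 
      (by norm_num; exact WithTop.coe_le_coe.2 (le_top : (2 : ℕ∞) ≤ ⊤))).differentiableAt (by simp)
  have key : ∀ a b : ι, pdy (pdy g a) b x y
      = fderiv ℝ (fderiv ℝ (g x)) y (Pi.single b 1) (Pi.single a 1) := by
    intro a b
    have : HasFDerivAt (fun y' => fderiv ℝ (g x) y' (Pi.single a 1)) _ y :=
      hd.hasFDerivAt.clm_apply (hasFDerivAt_const (Pi.single a (1 : ℝ) : ι → ℝ) y)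
    change fderiv ℝ (fun y' => fderiv ℝ (g x) y' (Pi.single a 1)) y (Pi.single b 1) = _
    rw [this.fderiv]
    simp
  rw [key, key]
  exact hs _ _

theorem fderiv_eq_sum (L : (ι → ℝ) →L[ℝ] ℝ) (v : ι → ℝ) :
    L v = ∑ k, v k * L (Pi.single k 1) := by
  conv_lhs => rw [pi_eq_sum_univ' v]
  simp

/-- Positive homogeneity of degree `d` in the fiber variable. -/
def HomOn (U : Set (ι → ℝ)) (g : (ι → ℝ) → (ι → ℝ) → ℝ) (d : ℕ) : Prop :=
  ∀ x ∈ U, ∀ y : ι → ℝ, ∀ c : ℝ, 0 < c → g x (c • y) = c ^ d * g x y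

theorem HomOn.pdy {U : Set (ι → ℝ)} {d : ℕ} (hg : HomOn U g (d + 1)) (α : ι) :
    HomOn U (pdy g α) d := by
  intro x hx y c hc
  have h1 := fderiv_comp_smul (𝕜 := ℝ) (f := g x) (x := y) c
  have h2 : (fun y => g x (c • y)) = fun y => c ^ (d + 1) • g x y := by
    ext y; simpa using hg x hx y c hc
  rw [h2] at h1
  have h3 : fderiv ℝ (fun y => c ^ (d + 1) • g x y) y = c ^ (d + 1) • fderiv ℝ (g x) y :=
    congrFun (fderiv_const_smul_field (𝕜 := ℝ) (R := ℝ) (f := g x) (c ^ (d + 1))) y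
  rw [h3] at h1
  have h4 := congrArg (fun L => L (Pi.single α 1)) h1
  simp only [_root_.smul_apply, smul_eq_mul] at h4
  simp only [_root_.pdy]
  have : c * (fderiv ℝ (g x) (c • y)) (Pi.single α 1)
    = c * (c ^ d * (fderiv ℝ (g x) y) (Pi.single α 1)) := by rw [← h4]; ring
  exact mul_left_cancel₀ hc.ne' this

theorem HomOn.pdx {U : Set (ι → ℝ)} (hU : IsOpen U) {d : ℕ} (hg : HomOn U g d) (α : ι) :
    HomOn U (pdx g α) d := by
  intro x hx y c hc
  have : (fun x' => g x' (c • y)) =ᶠ[nhds x] fun x' => c ^ d • g x' y := by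
    filter_upwards [hU.mem_nhds hx] with x' hx' using by simpa using hg x' hx' y c hc
  simp only [_root_.pdx]
  rw [this.fderiv_eq]
  have h3 : fderiv ℝ (fun x' => c ^ d • g x' y) x = c ^ d • fderiv ℝ (fun x' => g x' y) x :=
    congrFun (fderiv_const_smul_field (𝕜 := ℝ) (R := ℝ) (f := fun x' => g x' y) (c ^ d)) x
  rw [h3]
  simp

theorem HomOn.euler {U : Set (ι → ℝ)} {d : ℕ} (hg : HomOn U g d) {x y : ι → ℝ} (hx : x ∈ U)
    (hd : DifferentiableAt ℝ (g x) y) : ∑ k, y k * _root_.pdy g k x y = d * g x y := by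
  have h1 : HasDerivAt (fun c : ℝ => g x (c • y)) (fderiv ℝ (g x) y y) 1 := by
    have hd' : HasFDerivAt (g x) (fderiv ℝ (g x) y) ((1 : ℝ) • y) := by
      simpa using hd.hasFDerivAt
    have h2 : HasDerivAt (fun c : ℝ => c • y) y 1 := by
      simpa using (hasDerivAt_id (1 : ℝ)).smul_const y
    exact hd'.comp_hasDerivAt 1 h2
  have h2 : HasDerivAt (fun c : ℝ => c ^ d * g x y) (d * g x y) 1 := by
    simpa using (hasDerivAt_pow d (1 : ℝ)).mul_const (g x y)
  have h3 : (fun c : ℝ => g x (c • y)) =ᶠ[nhds 1] fun c : ℝ => c ^ d * g x y := by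
    filter_upwards [lt_mem_nhds (zero_lt_one' ℝ)] with c hc using hg x hx y c hc
  have h4 := (h1.congr_of_eventuallyEq h3.symm).unique h2
  rw [← h4, fderiv_eq_sum]
  rfl

end general

/-! ### Facts about a single Finsler metric -/

section single

variable {ι : Type*} [Fintype ι] [DecidableEq ι] {U : Set (ι → ℝ)} {F : (ι → ℝ) → (ι → ℝ) → ℝ}

/-- The square of a Finsler metric. -/
def sqF (F : (ι → ℝ) → (ι → ℝ) → ℝ) : (ι → ℝ) → (ι → ℝ) → ℝ := fun x y => (F x y) ^ 2

theorem IsFinslerMetric.isOpenW (hF : IsFinslerMetric U F) :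
    IsOpen (U ×ˢ {y : ι → ℝ | y ≠ 0}) :=
  hF.isOpen.prod isOpen_ne

theorem IsFinslerMetric.sm (hF : IsFinslerMetric U F) :
    SmOn (U ×ˢ {y : ι → ℝ | y ≠ 0}) (sqF F) := hF.smooth

theorem fundTensor_eq (x y : ι → ℝ) (α β : ι) :
    fundTensor F x y α β = pdy (pdy (sqF F) β) α x y := rfl

theorem IsFinslerMetric.hom (hF : IsFinslerMetric U F) : HomOn U (sqF F) 2 := by
  intro x hx y c hc
  simp only [sqF, hF.homog x hx y c, abs_of_pos hc]
  ring

theorem sm_det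
    (A : (ι → ℝ) → (ι → ℝ) → Matrix ι ι ℝ)
    (hA : ∀ α β, SmOn (U ×ˢ {y : ι → ℝ | y ≠ 0}) (fun x y => A x y α β)) :
    SmOn (U ×ˢ {y : ι → ℝ | y ≠ 0}) (fun x y => (A x y).det) := by
  simp only [SmOn, Matrix.det_apply]
  refine ContDiffOn.sum fun σ _ => ?_
  exact (contDiffOn_prod fun i _ => hA _ _).const_smul _

theorem IsFinslerMetric.sm_inv (hF : IsFinslerMetric U F) (α β : ι) :
    SmOn (U ×ˢ {y : ι → ℝ | y ≠ 0}) (fun x y => (fundTensor F x y)⁻¹ α β) := by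
  have h0 : ∀ α β, SmOn (U ×ˢ {y : ι → ℝ | y ≠ 0}) (fun x y => fundTensor F x y α β) :=
    fun α β => (hF.sm.pdy hF.isOpenW β).pdy hF.isOpenW α
  have h1 := sm_det _ h0
  have h2 : SmOn (U ×ˢ {y : ι → ℝ | y ≠ 0})
      (fun x y => ((fundTensor F x y).updateRow β (Pi.single α 1)).det) := by
    refine sm_det _ fun a b => ?_
    by_cases hab : a = β
    · subst hab
      simp only [Matrix.updateRow_self]
      exact contDiffOn_const
    · simp only [Matrix.updateRow_ne hab]
      exact h0 a b
  have h3 : ContDiffOn ℝ (⊤ : ℕ∞) (fun p : (ι → ℝ) × (ι → ℝ) =>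
      (fundTensor F p.1 p.2).det⁻¹) (U ×ˢ {y : ι → ℝ | y ≠ 0}) :=
    ContDiffOn.inv h1 fun p hp => (hF.posDef p.1 hp.1 p.2 hp.2).det_pos.ne'
  simp only [SmOn, Matrix.inv_def, Matrix.smul_apply, Matrix.adjugate_apply, Ring.inverse_eq_inv',
    smul_eq_mul]
  exact h3.mul h2

theorem spray_eq (α : ι) (x y : ι → ℝ) : spray F α x y =
    (1 / 2) * ∑ β, (fundTensor F x y)⁻¹ α β *
      ((∑ γ, pdx (pdy (sqF F) β) γ x y * y γ) - pdx (sqF F) β x y) := rfl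

theorem IsFinslerMetric.sm_spray (hF : IsFinslerMetric U F) (α : ι) :
    SmOn (U ×ˢ {y : ι → ℝ | y ≠ 0}) (spray F α) := by
  refine contDiffOn_const.mul (ContDiffOn.sum fun β _ => (hF.sm_inv α β).mul
    (ContDiffOn.sub (ContDiffOn.sum fun γ _ => ContDiffOn.mul ?_ ?_) ?_))
  · exact (hF.sm.pdy hF.isOpenW β).pdx hF.isOpenW γ
  · exact ContDiff.contDiffOn (by fun_prop)
  · exact hF.sm.pdx hF.isOpenW β

theorem IsFinslerMetric.hom_spray (hF : IsFinslerMetric U F) (α : ι) :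
    HomOn U (spray F α) 2 := by
  intro x hx y c hc
  have h1 : fundTensor F x (c • y) = fundTensor F x y := by
    ext a b
    have := ((hF.hom.pdy b).pdy a) x hx y c hc
    simpa [fundTensor_eq] using this
  simp only [spray_eq, h1, Finset.mul_sum]
  refine Finset.sum_congr rfl fun β _ => ?_
  rw [(hF.hom.pdx hF.isOpen β) x hx y c hc]
  have h2 : ∀ γ, pdx (pdy (sqF F) β) γ x (c • y) * (c • y) γ
      = c ^ 2 * (pdx (pdy (sqF F) β) γ x y * y γ) := by
    intro γ
    rw [((hF.hom.pdy β).pdx hF.isOpen γ) x hx y c hc]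
    simp only [Pi.smul_apply, smul_eq_mul]
    ring
  simp only [h2, ← Finset.mul_sum]
  ring

variable {x y : ι → ℝ}

theorem IsFinslerMetric.euler_fund (hF : IsFinslerMetric U F) (hx : x ∈ U) (hy : y ≠ 0) (β : ι) :
    ∑ α, y α * fundTensor F x y α β = pdy (sqF F) β x y := by
  have := (hF.hom.pdy β).euler hx
    ((hF.sm.pdy hF.isOpenW β).hasFDerivAt_y hF.isOpenW (x := x) (y := y)
      ⟨hx, hy⟩).differentiableAt
  simpa [fundTensor_eq] using this

theorem IsFinslerMetric.fund_symm (hF : IsFinslerMetric U F) (hx : x ∈ U) (hy : y ≠ 0) (α β : ι) :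
    fundTensor F x y α β = fundTensor F x y β α := by
  have := (hF.posDef x hx y hy).isHermitian.apply α β
  simpa using this.symm

theorem IsFinslerMetric.isUnit_det (hF : IsFinslerMetric U F) (hx : x ∈ U) (hy : y ≠ 0) :
    IsUnit (fundTensor F x y).det := (hF.posDef x hx y hy).det_pos.ne'.isUnit

theorem IsFinslerMetric.euler_pdx (hF : IsFinslerMetric U F) (hx : x ∈ U) (hy : y ≠ 0) (γ : ι) :
    ∑ k, y k * pdx (pdy (sqF F) k) γ x y = 2 * pdx (sqF F) γ x y := by
  have h1 : pdx (fun x' y' => ∑ k, y' k * pdy (sqF F) k x' y') γ x y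
      = pdx (fun x' y' => 2 * sqF F x' y') γ x y := by
    refine pdx_congr hF.isOpenW ?_ γ x y ⟨hx, hy⟩
    intro x y hp
    simpa using hF.hom.euler hp.1 (hF.sm.hasFDerivAt_y hF.isOpenW hp).differentiableAt
  have hp : (x, y) ∈ U ×ˢ {y : ι → ℝ | y ≠ 0} := ⟨hx, hy⟩
  have h2 : HasFDerivAt (fun x' => ∑ k, y k * pdy (sqF F) k x' y) _ x :=
    HasFDerivAt.fun_sum fun k _ =>
      ((hF.sm.pdy hF.isOpenW k).hasFDerivAt_x hF.isOpenW hp).differentiableAt.hasFDerivAt.const_mul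
        (y k)
  have h3 := (hF.sm.hasFDerivAt_x hF.isOpenW hp).differentiableAt.hasFDerivAt.const_mul (2 : ℝ)
  simp only [pdx] at h1 ⊢
  rw [h2.fderiv, h3.fderiv] at h1
  simpa [_root_.sum_apply] using h1

/-- The linear system solved by the spray coefficients. -/
theorem IsFinslerMetric.spray_system (hF : IsFinslerMetric U F) (hx : x ∈ U) (hy : y ≠ 0) (β : ι) :
    ∑ α, spray F α x y * fundTensor F x y α β
      = (1 / 2) * ((∑ γ, pdx (pdy (sqF F) β) γ x y * y γ) - pdx (sqF F) β x y) := by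
  set R : ι → ℝ := fun β => (∑ γ, pdx (pdy (sqF F) β) γ x y * y γ) - pdx (sqF F) β x y with hR
  have h1 : (fun α => spray F α x y) = (1 / 2 : ℝ) • ((fundTensor F x y)⁻¹ *ᵥ R) := by
    ext α
    simp [spray_eq, Matrix.mulVec, dotProduct, hR]
  have h2 : fundTensor F x y *ᵥ (fun α => spray F α x y) = (1 / 2 : ℝ) • R := by
    rw [h1, Matrix.mulVec_smul, Matrix.mulVec_mulVec,
      Matrix.mul_nonsing_inv _ (hF.isUnit_det hx hy), Matrix.one_mulVec]
  have h3 := congrFun h2 β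
  simp only [Matrix.mulVec, dotProduct, Pi.smul_apply, smul_eq_mul] at h3
  rw [← h3]
  exact Finset.sum_congr rfl fun α _ => by rw [hF.fund_symm hx hy α β, mul_comm]

theorem IsFinslerMetric.spray_unique (hF : IsFinslerMetric U F) (hx : x ∈ U) (hy : y ≠ 0)
    (v : ι → ℝ) (hv : ∀ β, ∑ α, v α * fundTensor F x y α β
      = (1 / 2) * ((∑ γ, pdx (pdy (sqF F) β) γ x y * y γ) - pdx (sqF F) β x y)) (α : ι) :
    spray F α x y = v α := by
  have h1 : (fun α => spray F α x y) ᵥ* fundTensor F x y = v ᵥ* fundTensor F x y := by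
    ext β
    simp only [Matrix.vecMul, dotProduct]
    rw [hv, hF.spray_system hx hy]
  have h2 := congrArg (fun w => w ᵥ* (fundTensor F x y)⁻¹) h1
  simp only [Matrix.vecMul_vecMul, Matrix.mul_nonsing_inv _ (hF.isUnit_det hx hy),
    Matrix.vecMul_one] at h2
  exact congrFun h2 α

theorem IsFinslerMetric.pdy_spray (hF : IsFinslerMetric U F) (hx : x ∈ U) (hy : y ≠ 0) :
    ∑ α, spray F α x y * pdy (sqF F) α x y = (1 / 2) * ∑ γ, pdx (sqF F) γ x y * y γ := by
  have h1 : ∑ α, spray F α x y * pdy (sqF F) α x y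
      = ∑ β, y β * ∑ α, spray F α x y * fundTensor F x y α β := by
    simp only [Finset.mul_sum]
    rw [Finset.sum_comm]
    refine Finset.sum_congr rfl fun α _ => ?_
    rw [← hF.euler_fund hx hy α, Finset.mul_sum]
    exact Finset.sum_congr rfl fun β _ => by rw [hF.fund_symm hx hy α β]; ring
  have h2 : ∑ β, y β * ∑ γ, pdx (pdy (sqF F) β) γ x y * y γ
      = 2 * ∑ γ, pdx (sqF F) γ x y * y γ := by
    simp only [Finset.mul_sum]
    rw [Finset.sum_comm]
    refine Finset.sum_congr rfl fun γ _ => ?_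
    rw [← mul_assoc, ← hF.euler_pdx hx hy γ, Finset.sum_mul]
    exact Finset.sum_congr rfl fun β _ => by ring
  rw [h1]
  simp only [hF.spray_system hx hy]
  have h3 : ∑ β, y β * ((1 / 2) * ((∑ γ, pdx (pdy (sqF F) β) γ x y * y γ) - pdx (sqF F) β x y))
      = (1 / 2) * (∑ β, y β * ∑ γ, pdx (pdy (sqF F) β) γ x y * y γ)
        - (1 / 2) * ∑ β, pdx (sqF F) β x y * y β := by
    rw [Finset.mul_sum, Finset.mul_sum, ← Finset.sum_sub_distrib]
    exact Finset.sum_congr rfl fun β _ => by ring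
  rw [h3, h2]
  ring

theorem landsberg_eq (hF : IsFinslerMetric U F) (hx : x ∈ U) (hy : y ≠ 0) (β γ η : ι) :
    landsbergCurv F β γ η x y
      = -(1 / 4) * ∑ α, pdy (sqF F) α x y * berwaldCurv F α β γ η x y := by
  simp only [landsbergCurv]
  rw [Finset.sum_comm]
  congr 1
  refine Finset.sum_congr rfl fun α _ => ?_
  rw [← hF.euler_fund hx hy α, Finset.sum_mul]

/-- Contracting the Berwald curvature with `y` gives zero. -/
theorem IsFinslerMetric.berwald_y (hF : IsFinslerMetric U F) (hx : x ∈ U) (hy : y ≠ 0)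
    (α β γ : ι) : ∑ η, y η * berwaldCurv F α β γ η x y = 0 := by
  have hW := hF.isOpenW
  have hS := hF.sm_spray α
  have hp : (x, y) ∈ U ×ˢ {y : ι → ℝ | y ≠ 0} := ⟨hx, hy⟩
  have h1 : ∀ η, berwaldCurv F α β γ η x y = pdy (pdy (pdy (spray F α) γ) β) η x y := by
    intro η
    have e1 : berwaldCurv F α β γ η x y = pdy (pdy (pdy (spray F α) γ) η) β x y :=
      pdy_congr hW (pdy_pdy_symm hW hS η γ) β x y hp
    rw [e1]
    exact pdy_pdy_symm hW (hS.pdy hW γ) η β x y hp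
  simp only [h1]
  have h2 := (((hF.hom_spray α).pdy γ).pdy β).euler hx
    (((hS.pdy hW γ).pdy hW β).hasFDerivAt_y hW hp).differentiableAt
  simpa using h2

theorem IsFinslerMetric.landsberg_y (hF : IsFinslerMetric U F) (hx : x ∈ U) (hy : y ≠ 0)
    (β γ : ι) : ∑ η, landsbergCurv F β γ η x y * y η = 0 := by
  simp only [landsberg_eq hF hx hy, mul_assoc, ← Finset.mul_sum, Finset.sum_mul]
  rw [Finset.sum_comm]
  have : ∀ α, ∑ η, pdy (sqF F) α x y * (berwaldCurv F α β γ η x y * y η) = 0 := by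
    intro α
    rw [← Finset.mul_sum]
    have := hF.berwald_y hx hy α β γ
    simp only [mul_comm (y _)] at this
    rw [this, mul_zero]
  simp [this]

end single

/-! ### Pullbacks along coordinate projections -/

section lift

set_option linter.unusedSectionVars false

variable {ι κ : Type*} [Fintype ι] [DecidableEq ι] [Fintype κ] [DecidableEq κ]

/-- The pullback of a function of `(x, y)` along the coordinate projection given by `e`. -/
def liftF (e : ι → κ) (g : (ι → ℝ) → (ι → ℝ) → ℝ) : (κ → ℝ) → (κ → ℝ) → ℝ :=
  fun x y => g (x ∘ e) (y ∘ e)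

/-- The coordinate projection given by `e`, as a continuous linear map. -/
def projCLM (e : ι → κ) : (κ → ℝ) →L[ℝ] (ι → ℝ) :=
  ContinuousLinearMap.pi fun i => ContinuousLinearMap.proj (e i)

theorem projCLM_apply (e : ι → κ) (v : κ → ℝ) : projCLM e v = v ∘ e := rfl

variable {e : ι → κ} {V : Set ((ι → ℝ) × (ι → ℝ))} {W : Set ((κ → ℝ) × (κ → ℝ))}
  {g : (ι → ℝ) → (ι → ℝ) → ℝ}

theorem single_comp (he : Function.Injective e) (i : ι) :
    (Pi.single (e i) (1 : ℝ) : κ → ℝ) ∘ e = Pi.single i 1 := by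
  ext j
  simp [Pi.single_apply, he.eq_iff]

theorem single_comp_ne {α : κ} (hα : α ∉ Set.range e) :
    (Pi.single α (1 : ℝ) : κ → ℝ) ∘ e = 0 := by
  ext j
  have : e j ≠ α := fun h => hα ⟨j, h⟩
  simp [this]

theorem SmOn.lift (hWV : ∀ x y, (x, y) ∈ W → (x ∘ e, y ∘ e) ∈ V) (hg : SmOn V g) :
    SmOn W (liftF e g) := by
  refine ContDiffOn.comp (t := V) (f := fun p : (κ → ℝ) × (κ → ℝ) => (p.1 ∘ e, p.2 ∘ e)) hg ?_
    (fun p hp => hWV p.1 p.2 hp)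
  refine ContDiff.contDiffOn ?_
  exact ((projCLM e).contDiff.comp contDiff_fst).prodMk ((projCLM e).contDiff.comp contDiff_snd)

theorem pdy_lift (hV : IsOpen V) (hWV : ∀ x y, (x, y) ∈ W → (x ∘ e, y ∘ e) ∈ V) (hg : SmOn V g)
    {x y : κ → ℝ} (hp : (x, y) ∈ W) (α : κ) :
    pdy (liftF e g) α x y = fderiv ℝ (g (x ∘ e)) (y ∘ e) ((Pi.single α 1 : κ → ℝ) ∘ e) := by
  have h1 := (hg.hasFDerivAt_y hV (hWV x y hp)).differentiableAt.hasFDerivAt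
  have h2 : HasFDerivAt (g (x ∘ e) ∘ projCLM e) _ y :=
    HasFDerivAt.comp (f := projCLM e) y h1 (projCLM e).hasFDerivAt
  have h3 : liftF e g x = g (x ∘ e) ∘ projCLM e := rfl
  simp only [pdy, h3, h2.fderiv]
  rfl

theorem pdx_lift (hV : IsOpen V) (hWV : ∀ x y, (x, y) ∈ W → (x ∘ e, y ∘ e) ∈ V) (hg : SmOn V g)
    {x y : κ → ℝ} (hp : (x, y) ∈ W) (α : κ) :
    pdx (liftF e g) α x y
      = fderiv ℝ (fun x' => g x' (y ∘ e)) (x ∘ e) ((Pi.single α 1 : κ → ℝ) ∘ e) := by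
  have h1 := (hg.hasFDerivAt_x hV (hWV x y hp)).differentiableAt.hasFDerivAt
  have h2 : HasFDerivAt ((fun x' => g x' (y ∘ e)) ∘ projCLM e) _ x :=
    HasFDerivAt.comp (f := projCLM e) x h1 (projCLM e).hasFDerivAt
  have h3 : (fun x' => liftF e g x' y) = (fun x' => g x' (y ∘ e)) ∘ projCLM e := rfl
  simp only [pdx, h3, h2.fderiv]
  rfl

theorem pdy_lift_in (he : Function.Injective e) (hV : IsOpen V)
    (hWV : ∀ x y, (x, y) ∈ W → (x ∘ e, y ∘ e) ∈ V) (hg : SmOn V g) (i : ι) :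
    ∀ x y, (x, y) ∈ W → pdy (liftF e g) (e i) x y = liftF e (pdy g i) x y := by
  intro x y hp
  rw [pdy_lift hV hWV hg hp, single_comp he]
  rfl

theorem pdy_lift_out (hV : IsOpen V)
    (hWV : ∀ x y, (x, y) ∈ W → (x ∘ e, y ∘ e) ∈ V) (hg : SmOn V g) {α : κ}
    (hα : α ∉ Set.range e) :
    ∀ x y, (x, y) ∈ W → pdy (liftF e g) α x y = 0 := by
  intro x y hp
  rw [pdy_lift hV hWV hg hp, single_comp_ne hα, map_zero]

theorem pdx_lift_in (he : Function.Injective e) (hV : IsOpen V)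
    (hWV : ∀ x y, (x, y) ∈ W → (x ∘ e, y ∘ e) ∈ V) (hg : SmOn V g) (i : ι) :
    ∀ x y, (x, y) ∈ W → pdx (liftF e g) (e i) x y = liftF e (pdx g i) x y := by
  intro x y hp
  rw [pdx_lift hV hWV hg hp, single_comp he]
  rfl

theorem pdx_lift_out (hV : IsOpen V)
    (hWV : ∀ x y, (x, y) ∈ W → (x ∘ e, y ∘ e) ∈ V) (hg : SmOn V g) {α : κ}
    (hα : α ∉ Set.range e) :
    ∀ x y, (x, y) ∈ W → pdx (liftF e g) α x y = 0 := by
  intro x y hp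
  rw [pdx_lift hV hWV hg hp, single_comp_ne hα, map_zero]

theorem pdy_zero (α : κ) (x y : κ → ℝ) : pdy (fun _ _ => (0 : ℝ)) α x y = 0 := by
  simp [pdy]

theorem pdx_zero (α : κ) (x y : κ → ℝ) : pdx (fun _ _ => (0 : ℝ)) α x y = 0 := by
  simp [pdx]

/-- First lifted identity for the spray. -/
theorem lift_pdy_spray {U : Set (ι → ℝ)} {F₁ : (ι → ℝ) → (ι → ℝ) → ℝ}
    (hF : IsFinslerMetric U F₁) (he : Function.Injective e)
    (hWV : ∀ x y, (x, y) ∈ W → (x ∘ e, y ∘ e) ∈ U ×ˢ {y : ι → ℝ | y ≠ 0})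
    {x y : κ → ℝ} (hp : (x, y) ∈ W) (v : κ → ℝ)
    (hv : ∀ i, v (e i) = spray F₁ i (x ∘ e) (y ∘ e)) :
    ∑ α, v α * pdy (liftF e (sqF F₁)) α x y
      = (1 / 2) * ∑ γ, pdx (liftF e (sqF F₁)) γ x y * y γ := by
  have hV := hF.isOpenW
  rw [← Fintype.sum_of_injective e he
      (fun i => spray F₁ i (x ∘ e) (y ∘ e) * pdy (sqF F₁) i (x ∘ e) (y ∘ e)) _
      (fun α hα => by rw [pdy_lift_out hV hWV hF.sm hα x y hp, mul_zero])
      (fun i => by rw [pdy_lift_in he hV hWV hF.sm i x y hp, hv]; rfl),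
    ← Fintype.sum_of_injective e he
      (fun i => pdx (sqF F₁) i (x ∘ e) (y ∘ e) * (y ∘ e) i) _
      (fun α hα => by rw [pdx_lift_out hV hWV hF.sm hα x y hp, zero_mul])
      (fun i => by rw [pdx_lift_in he hV hWV hF.sm i x y hp]; rfl)]
  exact hF.pdy_spray (hWV x y hp).1 (hWV x y hp).2

/-- Second lifted identity for the spray. -/
theorem lift_spray_system {U : Set (ι → ℝ)} {F₁ : (ι → ℝ) → (ι → ℝ) → ℝ}
    (hF : IsFinslerMetric U F₁) (he : Function.Injective e) (hW : IsOpen W)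
    (hWV : ∀ x y, (x, y) ∈ W → (x ∘ e, y ∘ e) ∈ U ×ˢ {y : ι → ℝ | y ≠ 0})
    {x y : κ → ℝ} (hp : (x, y) ∈ W) (v : κ → ℝ)
    (hv : ∀ i, v (e i) = spray F₁ i (x ∘ e) (y ∘ e)) (β : κ) :
    ∑ α, v α * pdy (pdy (liftF e (sqF F₁)) β) α x y
      = (1 / 2) * ((∑ γ, pdx (pdy (liftF e (sqF F₁)) β) γ x y * y γ)
        - pdx (liftF e (sqF F₁)) β x y) := by
  have hV := hF.isOpenW
  by_cases hβ : β ∈ Set.range e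
  · obtain ⟨b, rfl⟩ := hβ
    have h1 := pdy_congr hW (pdy_lift_in he hV hWV hF.sm b)
    have h2 := pdx_congr hW (pdy_lift_in he hV hWV hF.sm b)
    have hs := hF.sm.pdy hV b
    rw [← Fintype.sum_of_injective e he
      (fun i => spray F₁ i (x ∘ e) (y ∘ e) * fundTensor F₁ (x ∘ e) (y ∘ e) i b) _
      (fun α hα => by rw [h1 _ x y hp, pdy_lift_out hV hWV hs hα x y hp, mul_zero])
      (fun i => by rw [h1 _ x y hp, pdy_lift_in he hV hWV hs i x y hp, hv]; rfl),
      ← Fintype.sum_of_injective e he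
      (fun i => pdx (pdy (sqF F₁) b) i (x ∘ e) (y ∘ e) * (y ∘ e) i) _
      (fun α hα => by rw [h2 _ x y hp, pdx_lift_out hV hWV hs hα x y hp, zero_mul])
      (fun i => by rw [h2 _ x y hp, pdx_lift_in he hV hWV hs i x y hp]; rfl),
      pdx_lift_in he hV hWV hF.sm b x y hp]
    exact hF.spray_system (hWV x y hp).1 (hWV x y hp).2 b
  · have h1 := pdy_congr (h := fun _ _ => 0) hW (pdy_lift_out hV hWV hF.sm hβ)
    have h2 := pdx_congr (h := fun _ _ => 0) hW (pdy_lift_out hV hWV hF.sm hβ)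
    simp [h1 _ x y hp, h2 _ x y hp, pdy_zero, pdx_zero, pdx_lift_out hV hWV hF.sm hβ x y hp]

end lift

/-! ### The chain rule for `f (A, B)` -/

section chain

set_option linter.unusedSectionVars false

variable {κ : Type*} [Fintype κ] [DecidableEq κ] {W : Set ((κ → ℝ) × (κ → ℝ))}

/-- Smoothness on the open positive quadrant. -/
def SmQ (φ : ℝ → ℝ → ℝ) : Prop :=
  ContDiffOn ℝ (⊤ : ℕ∞) (fun p : ℝ × ℝ => φ p.1 p.2) (Set.Ioi 0 ×ˢ Set.Ioi 0)

/-- First partial derivative. -/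
noncomputable def dS (φ : ℝ → ℝ → ℝ) : ℝ → ℝ → ℝ :=
  fun s t => fderiv ℝ (fun p : ℝ × ℝ => φ p.1 p.2) (s, t) (1, 0)

/-- Second partial derivative. -/
noncomputable def dT (φ : ℝ → ℝ → ℝ) : ℝ → ℝ → ℝ :=
  fun s t => fderiv ℝ (fun p : ℝ × ℝ => φ p.1 p.2) (s, t) (0, 1)

theorem isOpen_quad : IsOpen (Set.Ioi (0 : ℝ) ×ˢ Set.Ioi (0 : ℝ)) := isOpen_Ioi.prod isOpen_Ioi

theorem SmQ.dS {φ : ℝ → ℝ → ℝ} (h : SmQ φ) : SmQ (dS φ) :=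
  (h.fderiv_of_isOpen isOpen_quad (by simp)).clm_apply contDiffOn_const

theorem SmQ.dT {φ : ℝ → ℝ → ℝ} (h : SmQ φ) : SmQ (dT φ) :=
  (h.fderiv_of_isOpen isOpen_quad (by simp)).clm_apply contDiffOn_const

variable {A B : (κ → ℝ) → (κ → ℝ) → ℝ} {φ : ℝ → ℝ → ℝ}

theorem SmQ.comp (h : SmQ φ) (hA : SmOn W A) (hB : SmOn W B)
    (hpos : ∀ x y, (x, y) ∈ W → 0 < A x y ∧ 0 < B x y) :
    SmOn W (fun x y => φ (A x y) (B x y)) :=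
  ContDiffOn.comp (t := Set.Ioi 0 ×ˢ Set.Ioi 0)
    (f := fun p : (κ → ℝ) × (κ → ℝ) => (A p.1 p.2, B p.1 p.2)) h (hA.prodMk hB)
    (fun p hp => hpos p.1 p.2 hp)

theorem SmQ.fderiv_comp {E : Type*} [NormedAddCommGroup E] [NormedSpace ℝ E] (h : SmQ φ)
    {a b : E → ℝ} {z : E} (ha : DifferentiableAt ℝ a z) (hb : DifferentiableAt ℝ b z)
    (hpos : 0 < a z ∧ 0 < b z) (w : E) :
    fderiv ℝ (fun z => φ (a z) (b z)) z w
      = _root_.dS φ (a z) (b z) * fderiv ℝ a z w + _root_.dT φ (a z) (b z) * fderiv ℝ b z w := by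
  have h1 : HasFDerivAt (fun p : ℝ × ℝ => φ p.1 p.2) _ (a z, b z) :=
    ((h.contDiffAt (x := (a z, b z)) (isOpen_quad.mem_nhds ⟨hpos.1, hpos.2⟩)).differentiableAt (by simp)).hasFDerivAt
  have h2 := HasFDerivAt.comp (f := fun z => (a z, b z)) z h1
    (ha.hasFDerivAt.prodMk hb.hasFDerivAt)
  have h3 : (fun z => φ (a z) (b z)) = (fun p : ℝ × ℝ => φ p.1 p.2) ∘ fun z => (a z, b z) := rfl
  rw [h3, h2.fderiv]
  have h4 : (fderiv ℝ a z w, fderiv ℝ b z w)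
      = fderiv ℝ a z w • ((1 : ℝ), (0 : ℝ)) + fderiv ℝ b z w • ((0 : ℝ), (1 : ℝ)) := by simp
  simp only [ContinuousLinearMap.comp_apply, ContinuousLinearMap.prod_apply]
  rw [h4, map_add, map_smul, map_smul]
  simp only [_root_.dS, _root_.dT, smul_eq_mul]
  ring

theorem pdy_comp (hW : IsOpen W) (h : SmQ φ) (hA : SmOn W A) (hB : SmOn W B)
    (hpos : ∀ x y, (x, y) ∈ W → 0 < A x y ∧ 0 < B x y) (α : κ) :
    ∀ x y, (x, y) ∈ W → pdy (fun x y => φ (A x y) (B x y)) α x y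
      = dS φ (A x y) (B x y) * pdy A α x y + dT φ (A x y) (B x y) * pdy B α x y :=
  fun x y hp => h.fderiv_comp (hA.hasFDerivAt_y hW hp).differentiableAt
    (hB.hasFDerivAt_y hW hp).differentiableAt (hpos x y hp) _

theorem pdx_comp (hW : IsOpen W) (h : SmQ φ) (hA : SmOn W A) (hB : SmOn W B)
    (hpos : ∀ x y, (x, y) ∈ W → 0 < A x y ∧ 0 < B x y) (α : κ) :
    ∀ x y, (x, y) ∈ W → pdx (fun x y => φ (A x y) (B x y)) α x y
      = dS φ (A x y) (B x y) * pdx A α x y + dT φ (A x y) (B x y) * pdx B α x y :=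
  fun x y hp => h.fderiv_comp (hA.hasFDerivAt_x hW hp).differentiableAt
    (hB.hasFDerivAt_x hW hp).differentiableAt (hpos x y hp) _

theorem fderiv_mul_add {E : Type*} [NormedAddCommGroup E] [NormedSpace ℝ E]
    {a b c d : E → ℝ} {z : E} (ha : DifferentiableAt ℝ a z) (hb : DifferentiableAt ℝ b z)
    (hc : DifferentiableAt ℝ c z) (hd : DifferentiableAt ℝ d z) (w : E) :
    fderiv ℝ (fun z => a z * b z + c z * d z) z w
      = (fderiv ℝ a z w * b z + a z * fderiv ℝ b z w)
        + (fderiv ℝ c z w * d z + c z * fderiv ℝ d z w) := by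
  have h := (ha.hasFDerivAt.mul hb.hasFDerivAt).add (hc.hasFDerivAt.mul hd.hasFDerivAt)
  have h3 : (fun z => a z * b z + c z * d z) = a * b + c * d := rfl
  rw [h3, h.fderiv]
  simp only [_root_.add_apply, _root_.smul_apply, smul_eq_mul]
  ring

variable {G : (κ → ℝ) → (κ → ℝ) → ℝ}

theorem pdy_pdy_comp (hW : IsOpen W) (h : SmQ φ) (hA : SmOn W A) (hB : SmOn W B)
    (hpos : ∀ x y, (x, y) ∈ W → 0 < A x y ∧ 0 < B x y)
    (hG : ∀ x y, (x, y) ∈ W → G x y = φ (A x y) (B x y)) (α β : κ) :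
    ∀ x y, (x, y) ∈ W → pdy (pdy G β) α x y
      = ((dS (dS φ) (A x y) (B x y) * pdy A α x y + dT (dS φ) (A x y) (B x y) * pdy B α x y)
          * pdy A β x y + dS φ (A x y) (B x y) * pdy (pdy A β) α x y)
        + ((dS (dT φ) (A x y) (B x y) * pdy A α x y + dT (dT φ) (A x y) (B x y) * pdy B α x y)
          * pdy B β x y + dT φ (A x y) (B x y) * pdy (pdy B β) α x y) := by
  intro x y hp
  have h1 : ∀ x y, (x, y) ∈ W → pdy G β x y = _ := fun x y hp =>
    (pdy_congr hW hG β x y hp).trans (pdy_comp hW h hA hB hpos β x y hp)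
  rw [pdy_congr hW h1 α x y hp, ← pdy_comp hW h.dS hA hB hpos α x y hp,
    ← pdy_comp hW h.dT hA hB hpos α x y hp]
  exact fderiv_mul_add ((h.dS.comp hA hB hpos).hasFDerivAt_y hW hp).differentiableAt
    ((hA.pdy hW β).hasFDerivAt_y hW hp).differentiableAt
    ((h.dT.comp hA hB hpos).hasFDerivAt_y hW hp).differentiableAt
    ((hB.pdy hW β).hasFDerivAt_y hW hp).differentiableAt _

theorem pdx_pdy_comp (hW : IsOpen W) (h : SmQ φ) (hA : SmOn W A) (hB : SmOn W B)
    (hpos : ∀ x y, (x, y) ∈ W → 0 < A x y ∧ 0 < B x y)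
    (hG : ∀ x y, (x, y) ∈ W → G x y = φ (A x y) (B x y)) (α β : κ) :
    ∀ x y, (x, y) ∈ W → pdx (pdy G β) α x y
      = ((dS (dS φ) (A x y) (B x y) * pdx A α x y + dT (dS φ) (A x y) (B x y) * pdx B α x y)
          * pdy A β x y + dS φ (A x y) (B x y) * pdx (pdy A β) α x y)
        + ((dS (dT φ) (A x y) (B x y) * pdx A α x y + dT (dT φ) (A x y) (B x y) * pdx B α x y)
          * pdy B β x y + dT φ (A x y) (B x y) * pdx (pdy B β) α x y) := by
  intro x y hp
  have h1 : ∀ x y, (x, y) ∈ W → pdy G β x y = _ := fun x y hp =>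
    (pdy_congr hW hG β x y hp).trans (pdy_comp hW h hA hB hpos β x y hp)
  rw [pdx_congr hW h1 α x y hp, ← pdx_comp hW h.dS hA hB hpos α x y hp,
    ← pdx_comp hW h.dT hA hB hpos α x y hp]
  exact fderiv_mul_add ((h.dS.comp hA hB hpos).hasFDerivAt_x hW hp).differentiableAt
    ((hA.pdy hW β).hasFDerivAt_x hW hp).differentiableAt
    ((h.dT.comp hA hB hpos).hasFDerivAt_x hW hp).differentiableAt
    ((hB.pdy hW β).hasFDerivAt_x hW hp).differentiableAt _

/-- The linear system for the spray of `f (A, B)` follows from those for `A` and `B`. -/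
theorem system_comp (hW : IsOpen W) (h : SmQ φ) (hA : SmOn W A) (hB : SmOn W B)
    (hpos : ∀ x y, (x, y) ∈ W → 0 < A x y ∧ 0 < B x y)
    (hG : ∀ x y, (x, y) ∈ W → G x y = φ (A x y) (B x y))
    {x y : κ → ℝ} (hp : (x, y) ∈ W) (v : κ → ℝ) (β : κ)
    (hA1 : ∑ α, v α * pdy A α x y = (1 / 2) * ∑ γ, pdx A γ x y * y γ)
    (hB1 : ∑ α, v α * pdy B α x y = (1 / 2) * ∑ γ, pdx B γ x y * y γ)
    (hA2 : ∑ α, v α * pdy (pdy A β) α x y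
      = (1 / 2) * ((∑ γ, pdx (pdy A β) γ x y * y γ) - pdx A β x y))
    (hB2 : ∑ α, v α * pdy (pdy B β) α x y
      = (1 / 2) * ((∑ γ, pdx (pdy B β) γ x y * y γ) - pdx B β x y)) :
    ∑ α, v α * pdy (pdy G β) α x y
      = (1 / 2) * ((∑ γ, pdx (pdy G β) γ x y * y γ) - pdx G β x y) := by
  simp only [pdy_pdy_comp hW h hA hB hpos hG _ β x y hp, pdx_pdy_comp hW h hA hB hpos hG _ β x y hp,
    (pdx_congr hW hG β x y hp).trans (pdx_comp hW h hA hB hpos β x y hp)]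
  generalize dS φ (A x y) (B x y) = fs
  generalize dT φ (A x y) (B x y) = ft
  generalize dS (dS φ) (A x y) (B x y) = fss
  generalize dT (dS φ) (A x y) (B x y) = fst
  generalize dS (dT φ) (A x y) (B x y) = fts
  generalize dT (dT φ) (A x y) (B x y) = ftt
  have key : ∀ (c a b a' b' : κ → ℝ) (p q : ℝ),
      ∑ α, c α * (((fss * a α + fst * b α) * p + fs * a' α)
        + ((fts * a α + ftt * b α) * q + ft * b' α))
      = (fss * (∑ α, c α * a α) + fst * ∑ α, c α * b α) * p + fs * (∑ α, c α * a' α)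
        + ((fts * (∑ α, c α * a α) + ftt * ∑ α, c α * b α) * q + ft * ∑ α, c α * b' α) := by
    intro c a b a' b' p q
    simp only [Finset.mul_sum, Finset.sum_mul, ← Finset.sum_add_distrib]
    exact Finset.sum_congr rfl fun α _ => by ring
  simp only [mul_comm _ (y _)] at hA1 hB1 hA2 hB2 ⊢
  rw [key, key, hA1, hB1, hA2, hB2]
  ring

end chain

/-! ### The trace identity -/

section trace

variable {ι κ : Type*} [Fintype ι] [DecidableEq ι] [Fintype κ] [DecidableEq κ]

theorem trace_identity {e : ι → κ} (he : Function.Injective e) (M : Matrix κ κ ℝ)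
    (hM : IsUnit M.det) (N : Matrix ι ι ℝ) (hN : IsUnit N.det) (y k : ι → ℝ)
    (hy : ∀ b, ∑ a, y a * N a b = k b) (fs : ℝ) (w : κ → ℝ)
    (h1 : ∀ a c, M (e c) (e a) = fs * N c a + w (e c) * k a)
    (h2 : ∀ a, ∀ γ ∉ Set.range e, M γ (e a) = w γ * k a)
    (T : ι → ι → ℝ) (hT : ∀ b, ∑ c, T b c * y c = 0) :
    ∑ b, ∑ c, M⁻¹ (e b) (e c) * (fs * T b c) = ∑ b, ∑ c, N⁻¹ b c * T b c := by
  set u : ι → ℝ := fun b => ∑ γ, M⁻¹ (e b) γ * w γ with hu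
  set P : Matrix ι ι ℝ := fun b c => M⁻¹ (e b) (e c) with hP
  have e1 : fs • (P * N) = 1 - Matrix.vecMulVec u k := by
    ext b a
    have h3 : (M⁻¹ * M) (e b) (e a) = (1 : Matrix κ κ ℝ) (e b) (e a) := by
      rw [Matrix.nonsing_inv_mul _ hM]
    rw [Matrix.mul_apply] at h3
    have h4 : ∑ γ, M⁻¹ (e b) γ * M γ (e a)
        = ∑ γ, (M⁻¹ (e b) γ * w γ) * k a + ∑ c, M⁻¹ (e b) (e c) * (fs * N c a) := by
      have h5 : ∑ c, M⁻¹ (e b) (e c) * (fs * N c a)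
          = ∑ γ, M⁻¹ (e b) γ * (M γ (e a) - w γ * k a) := by
        refine Fintype.sum_of_injective e he _ _ (fun γ hγ => ?_) (fun c => ?_)
        · rw [h2 a γ hγ]; ring
        · rw [h1]; ring
      rw [h5, ← Finset.sum_add_distrib]
      exact Finset.sum_congr rfl fun γ _ => by ring
    rw [h4, ← Finset.sum_mul] at h3
    have h6 : (1 : Matrix κ κ ℝ) (e b) (e a) = (1 : Matrix ι ι ℝ) b a := by
      simp [Matrix.one_apply, he.eq_iff]
    rw [h6] at h3
    rw [Matrix.sub_apply, ← h3, Matrix.vecMulVec_apply, Matrix.smul_apply, Matrix.mul_apply]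
    simp only [hu, hP, smul_eq_mul, Finset.mul_sum]
    rw [add_sub_cancel_left]
    exact Finset.sum_congr rfl fun γ _ => by ring
  have e2 : fs • P = N⁻¹ - Matrix.vecMulVec u y := by
    have h3 := congrArg (fun X => X * N⁻¹) e1
    have h4 : k = y ᵥ* N := by ext b; rw [← hy b]; rfl
    simp only [Matrix.smul_mul, Matrix.mul_assoc, Matrix.mul_nonsing_inv _ hN, Matrix.mul_one,
      Matrix.sub_mul, Matrix.one_mul, Matrix.vecMulVec_mul, h4, Matrix.vecMul_vecMul,
      Matrix.vecMul_one] at h3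
    exact h3
  have e3 : ∀ b c, M⁻¹ (e b) (e c) * (fs * T b c) = N⁻¹ b c * T b c - u b * (T b c * y c) := by
    intro b c
    have : fs * M⁻¹ (e b) (e c) = N⁻¹ b c - u b * y c := congrFun (congrFun e2 b) c
    calc _ = (fs * M⁻¹ (e b) (e c)) * T b c := by ring
      _ = _ := by rw [this]; ring
  simp only [e3, Finset.sum_sub_distrib, ← Finset.mul_sum, hT, mul_zero, 
    sub_zero]

end trace

/-! ### One block of the product -/

section block

variable {ι κ : Type*} [Fintype ι] [DecidableEq ι] [Fintype κ] [DecidableEq κ]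
  {e : ι → κ} {V : Set ((ι → ℝ) × (ι → ℝ))} {W : Set ((κ → ℝ) × (κ → ℝ))}

theorem berwald_lift_in {S : (κ → ℝ) → (κ → ℝ) → ℝ} {S₁ : (ι → ℝ) → (ι → ℝ) → ℝ}
    (he : Function.Injective e) (hV : IsOpen V) (hW : IsOpen W)
    (hWV : ∀ x y, (x, y) ∈ W → (x ∘ e, y ∘ e) ∈ V) (hS : SmOn V S₁)
    (h : ∀ x y, (x, y) ∈ W → S x y = liftF e S₁ x y) (b c d : ι) :
    ∀ x y, (x, y) ∈ W → pdy (pdy (pdy S (e d)) (e c)) (e b) x y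
      = pdy (pdy (pdy S₁ d) c) b (x ∘ e) (y ∘ e) := by
  have h1 : ∀ x y, (x, y) ∈ W → pdy S (e d) x y = liftF e (pdy S₁ d) x y := fun x y hp =>
    (pdy_congr hW h (e d) x y hp).trans (pdy_lift_in he hV hWV hS d x y hp)
  have h2 : ∀ x y, (x, y) ∈ W → pdy (pdy S (e d)) (e c) x y
      = liftF e (pdy (pdy S₁ d) c) x y := fun x y hp =>
    (pdy_congr hW h1 (e c) x y hp).trans (pdy_lift_in he hV hWV (hS.pdy hV d) c x y hp)
  exact fun x y hp => (pdy_congr hW h2 (e b) x y hp).trans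
    (pdy_lift_in he hV hWV ((hS.pdy hV d).pdy hV c) b x y hp)

theorem berwald_lift_out {S : (κ → ℝ) → (κ → ℝ) → ℝ} {S₁ : (ι → ℝ) → (ι → ℝ) → ℝ}
    (he : Function.Injective e) (hV : IsOpen V) (hW : IsOpen W)
    (hWV : ∀ x y, (x, y) ∈ W → (x ∘ e, y ∘ e) ∈ V) (hS : SmOn V S₁)
    (h : ∀ x y, (x, y) ∈ W → S x y = liftF e S₁ x y) (β γ η : κ)
    (hout : β ∉ Set.range e ∨ γ ∉ Set.range e ∨ η ∉ Set.range e) :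
    ∀ x y, (x, y) ∈ W → pdy (pdy (pdy S η) γ) β x y = 0 := by
  have hz : ∀ (g : (κ → ℝ) → (κ → ℝ) → ℝ), (∀ x y, (x, y) ∈ W → g x y = 0) → ∀ α : κ,
      ∀ x y, (x, y) ∈ W → pdy g α x y = 0 := fun g hg α x y hp =>
    (pdy_congr (h := fun _ _ => 0) hW hg α x y hp).trans (pdy_zero α x y)
  by_cases hη : η ∈ Set.range e
  · obtain ⟨d, rfl⟩ := hη
    have h1 : ∀ x y, (x, y) ∈ W → pdy S (e d) x y = liftF e (pdy S₁ d) x y := fun x y hp =>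
      (pdy_congr hW h (e d) x y hp).trans (pdy_lift_in he hV hWV hS d x y hp)
    by_cases hγ : γ ∈ Set.range e
    · obtain ⟨c, rfl⟩ := hγ
      have h2 : ∀ x y, (x, y) ∈ W → pdy (pdy S (e d)) (e c) x y
          = liftF e (pdy (pdy S₁ d) c) x y := fun x y hp =>
        (pdy_congr hW h1 (e c) x y hp).trans (pdy_lift_in he hV hWV (hS.pdy hV d) c x y hp)
      have hβ : β ∉ Set.range e := by simpa using hout
      exact fun x y hp => (pdy_congr hW h2 β x y hp).trans
        (pdy_lift_out hV hWV ((hS.pdy hV d).pdy hV c) hβ x y hp)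
    · exact hz _ (fun x y hp => (pdy_congr hW h1 γ x y hp).trans
        (pdy_lift_out hV hWV (hS.pdy hV d) hγ x y hp)) β
  · exact hz _ (hz _ (fun x y hp => (pdy_congr hW h η x y hp).trans
      (pdy_lift_out hV hWV hS hη x y hp)) γ) β

theorem block_J {U : Set (κ → ℝ)} {U₁ : Set (ι → ℝ)} {F : (κ → ℝ) → (κ → ℝ) → ℝ}
    {F₁ : (ι → ℝ) → (ι → ℝ) → ℝ} (hF : IsFinslerMetric U F) (hF₁ : IsFinslerMetric U₁ F₁)
    (he : Function.Injective e) (hW : IsOpen W)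
    (hWV : ∀ x y, (x, y) ∈ W → (x ∘ e, y ∘ e) ∈ U₁ ×ˢ {y : ι → ℝ | y ≠ 0})
    {x y : κ → ℝ} (hp : (x, y) ∈ W) (hx : x ∈ U) (hy : y ≠ 0)
    (hin : ∀ a x y, (x, y) ∈ W → spray F (e a) x y = liftF e (spray F₁ a) x y)
    (hout : ∀ α ∉ Set.range e, ∀ i β γ, berwaldCurv F α (e i) β γ x y = 0)
    (fs : ℝ) (w : κ → ℝ)
    (hG1 : ∀ a, pdy (sqF F) (e a) x y = fs * pdy (sqF F₁) a (x ∘ e) (y ∘ e))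
    (hM : ∀ a γ, fundTensor F x y γ (e a) = fs * pdy (pdy (liftF e (sqF F₁)) (e a)) γ x y
      + w γ * pdy (sqF F₁) a (x ∘ e) (y ∘ e)) (i : ι) :
    meanLandsbergCurv F (e i) x y = meanLandsbergCurv F₁ i (x ∘ e) (y ∘ e) := by
  have hV := hF₁.isOpenW
  have hx1 := (hWV x y hp).1
  have hy1 := (hWV x y hp).2
  have hS := fun a => hF₁.sm_spray a
  have L1 : ∀ b c, landsbergCurv F (e i) (e b) (e c) x y
      = fs * landsbergCurv F₁ i b c (x ∘ e) (y ∘ e) := by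
    intro b c
    rw [landsberg_eq hF hx hy, landsberg_eq hF₁ hx1 hy1,
      ← Fintype.sum_of_injective e he
        (fun a => fs * (pdy (sqF F₁) a (x ∘ e) (y ∘ e) * berwaldCurv F₁ a i b c (x ∘ e) (y ∘ e))) _
        (fun α hα => by rw [hout α hα, mul_zero])
        (fun a => by
          rw [hG1, mul_assoc]
          congr 2
          exact (berwald_lift_in he hV hW hWV (hS a) (hin a) i b c x y hp).symm),
      ← Finset.mul_sum]
    ring
  have L0 : ∀ β γ, (β ∉ Set.range e ∨ γ ∉ Set.range e) → landsbergCurv F (e i) β γ x y = 0 := by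
    intro β γ hβγ
    rw [landsberg_eq hF hx hy, Finset.sum_eq_zero, mul_zero]
    intro α _
    by_cases hα : α ∈ Set.range e
    · obtain ⟨a, rfl⟩ := hα
      have : berwaldCurv F (e a) (e i) β γ x y = 0 :=
        berwald_lift_out he hV hW hWV (hS a) (hin a) (e i) β γ (Or.inr hβγ) x y hp
      rw [this, mul_zero]
    · rw [hout α hα, mul_zero]
  have hfund : ∀ a γ, pdy (pdy (liftF e (sqF F₁)) (e a)) γ x y
      = pdy (liftF e (pdy (sqF F₁) a)) γ x y := fun a γ =>
    pdy_congr hW (pdy_lift_in he hV hWV hF₁.sm a) γ x y hp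
  simp only [meanLandsbergCurv]
  congr 1
  rw [← trace_identity he (fundTensor F x y) (hF.isUnit_det hx hy)
    (fundTensor F₁ (x ∘ e) (y ∘ e)) (hF₁.isUnit_det hx1 hy1) (y ∘ e)
    (fun a => pdy (sqF F₁) a (x ∘ e) (y ∘ e)) (fun b => hF₁.euler_fund hx1 hy1 b) fs w
    (fun a c => by
      rw [hM, hfund, pdy_lift_in he hV hWV (hF₁.sm.pdy hV a) c x y hp]
      rfl)
    (fun a γ hγ => by
      rw [hM, hfund, pdy_lift_out hV hWV (hF₁.sm.pdy hV a) hγ x y hp]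
      ring)
    (fun b c => landsbergCurv F₁ i b c (x ∘ e) (y ∘ e))
    (fun b => hF₁.landsberg_y hx1 hy1 i b)]
  symm
  refine Fintype.sum_of_injective e he _ _ (fun β hβ => ?_) (fun b => ?_)
  · exact Finset.sum_eq_zero fun γ _ => by rw [L0 β γ (Or.inl hβ), mul_zero]
  · refine Fintype.sum_of_injective e he _ _ (fun γ hγ => ?_) (fun c => ?_)
    · rw [L0 _ γ (Or.inr hγ), mul_zero]
    · rw [L1]

end block

/-- The mean Landsberg curvature of a Minkowskian product Finsler metric splits:
`J_i = J¹_i` on the first block and `J_{i'} = J²_{i'}` on the second block. -/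
theorem meanLandsbergCurv_of_minkowskian_product {m n : ℕ}
    (U₁ : Set (Fin m → ℝ)) (U₂ : Set (Fin n → ℝ))
    (F₁ : (Fin m → ℝ) → (Fin m → ℝ) → ℝ) (F₂ : (Fin n → ℝ) → (Fin n → ℝ) → ℝ)
    (f : ℝ → ℝ → ℝ) (F : (Fin m ⊕ Fin n → ℝ) → (Fin m ⊕ Fin n → ℝ) → ℝ)
    (hprod : IsMinkowskianProduct U₁ U₂ F₁ F₂ f F) :
    ∀ x : Fin m ⊕ Fin n → ℝ, (x ∘ Sum.inl) ∈ U₁ → (x ∘ Sum.inr) ∈ U₂ →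
    ∀ y : Fin m ⊕ Fin n → ℝ, (y ∘ Sum.inl) ≠ 0 → (y ∘ Sum.inr) ≠ 0 →
      (∀ i : Fin m,
        meanLandsbergCurv F (Sum.inl i) x y =
          meanLandsbergCurv F₁ i (x ∘ Sum.inl) (y ∘ Sum.inl)) ∧
      (∀ i' : Fin n,
        meanLandsbergCurv F (Sum.inr i') x y =
          meanLandsbergCurv F₂ i' (x ∘ Sum.inr) (y ∘ Sum.inr)) := by
  have hF := hprod.finsler
  have hF₁ := hprod.finsler₁
  have hF₂ := hprod.finsler₂
  have hf : SmQ f := hprod.f_smooth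
  have hi : Function.Injective (Sum.inl : Fin m → Fin m ⊕ Fin n) := Sum.inl_injective
  have hj : Function.Injective (Sum.inr : Fin n → Fin m ⊕ Fin n) := Sum.inr_injective
  set W : Set ((Fin m ⊕ Fin n → ℝ) × (Fin m ⊕ Fin n → ℝ)) :=
    {p | (p.1 ∘ Sum.inl, p.2 ∘ Sum.inl) ∈ U₁ ×ˢ {y : Fin m → ℝ | y ≠ 0} ∧
      (p.1 ∘ Sum.inr, p.2 ∘ Sum.inr) ∈ U₂ ×ˢ {y : Fin n → ℝ | y ≠ 0}} with hWdef
  have hW : IsOpen W := by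
    refine IsOpen.inter (hF₁.isOpenW.preimage ?_) (hF₂.isOpenW.preimage ?_)
    · exact ((projCLM Sum.inl).continuous.comp continuous_fst).prodMk
        ((projCLM Sum.inl).continuous.comp continuous_snd)
    · exact ((projCLM Sum.inr).continuous.comp continuous_fst).prodMk
        ((projCLM Sum.inr).continuous.comp continuous_snd)
  have hW1 : ∀ x y, (x, y) ∈ W →
      (x ∘ Sum.inl, y ∘ Sum.inl) ∈ U₁ ×ˢ {y : Fin m → ℝ | y ≠ 0} := fun x y hp => hp.1
  have hW2 : ∀ x y, (x, y) ∈ W →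
      (x ∘ Sum.inr, y ∘ Sum.inr) ∈ U₂ ×ˢ {y : Fin n → ℝ | y ≠ 0} := fun x y hp => hp.2
  have hy0 : ∀ x y, (x, y) ∈ W → y ≠ 0 := by
    rintro x y hp rfl
    exact (hW1 x _ hp).2 rfl
  have hU : ∀ x y, (x, y) ∈ W →
      x ∈ {x : Fin m ⊕ Fin n → ℝ | (x ∘ Sum.inl) ∈ U₁ ∧ (x ∘ Sum.inr) ∈ U₂} :=
    fun x y hp => ⟨(hW1 x y hp).1, (hW2 x y hp).1⟩
  set A := liftF (Sum.inl : Fin m → Fin m ⊕ Fin n) (sqF F₁) with hAdef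
  set B := liftF (Sum.inr : Fin n → Fin m ⊕ Fin n) (sqF F₂) with hBdef
  have hA : SmOn W A := hF₁.sm.lift hW1
  have hB : SmOn W B := hF₂.sm.lift hW2
  have hpos : ∀ x y, (x, y) ∈ W → 0 < A x y ∧ 0 < B x y := fun x y hp =>
    ⟨pow_pos (hF₁.pos _ (hW1 x y hp).1 _ (hW1 x y hp).2) 2,
      pow_pos (hF₂.pos _ (hW2 x y hp).1 _ (hW2 x y hp).2) 2⟩
  have hG : ∀ x y, (x, y) ∈ W → sqF F x y = f (A x y) (B x y) := by
    intro x y hp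
    simp only [sqF]
    rw [hprod.F_def, Real.sq_sqrt]
    · rfl
    · exact hprod.f_nonneg _ (Set.mem_Ici.2 (sq_nonneg _)) _ (Set.mem_Ici.2 (sq_nonneg _))
  have hspray : ∀ x y, (x, y) ∈ W → ∀ α, spray F α x y
      = Sum.elim (fun a => spray F₁ a (x ∘ Sum.inl) (y ∘ Sum.inl))
        (fun b => spray F₂ b (x ∘ Sum.inr) (y ∘ Sum.inr)) α := by
    intro x y hp
    refine hF.spray_unique (hU x y hp) (hy0 x y hp) _ fun β => ?_
    exact system_comp hW hf hA hB hpos hG hp _ β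
      (lift_pdy_spray hF₁ hi hW1 hp _ fun i => rfl)
      (lift_pdy_spray hF₂ hj hW2 hp _ fun i => rfl)
      (lift_spray_system hF₁ hi hW hW1 hp _ (fun i => rfl) β)
      (lift_spray_system hF₂ hj hW hW2 hp _ (fun i => rfl) β)
  have hsp1 : ∀ a x y, (x, y) ∈ W → spray F (Sum.inl a) x y = liftF Sum.inl (spray F₁ a) x y :=
    fun a x y hp => hspray x y hp (Sum.inl a)
  have hsp2 : ∀ a x y, (x, y) ∈ W → spray F (Sum.inr a) x y = liftF Sum.inr (spray F₂ a) x y :=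
    fun a x y hp => hspray x y hp (Sum.inr a)
  have hn1 : ∀ a : Fin m, (Sum.inl a : Fin m ⊕ Fin n) ∉ Set.range Sum.inr := by simp
  have hn2 : ∀ b : Fin n, (Sum.inr b : Fin m ⊕ Fin n) ∉ Set.range Sum.inl := by simp
  intro x hx1 hx2 y hy1 hy2
  have hp : (x, y) ∈ W := ⟨⟨hx1, hy1⟩, ⟨hx2, hy2⟩⟩
  have hpdG := fun β => (pdy_congr hW hG β x y hp).trans (pdy_comp hW hf hA hB hpos β x y hp)
  have hfund := fun α β => pdy_pdy_comp hW hf hA hB hpos hG α β x y hp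
  have hz : ∀ (g : (Fin m ⊕ Fin n → ℝ) → (Fin m ⊕ Fin n → ℝ) → ℝ),
      (∀ x y, (x, y) ∈ W → g x y = 0) → ∀ α, pdy g α x y = 0 := fun g hg α =>
    (pdy_congr (h := fun _ _ => 0) hW hg α x y hp).trans (pdy_zero α x y)
  have hA0 := fun b => pdy_lift_out hF₁.isOpenW hW1 hF₁.sm (hn2 b)
  have hB0 := fun a => pdy_lift_out hF₂.isOpenW hW2 hF₂.sm (hn1 a)
  have hA1 := fun a => pdy_lift_in hi hF₁.isOpenW hW1 hF₁.sm a x y hp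
  have hB1 := fun b => pdy_lift_in hj hF₂.isOpenW hW2 hF₂.sm b x y hp
  refine ⟨fun i => ?_, fun i => ?_⟩
  · refine block_J hF hF₁ hi hW hW1 hp (hU x y hp) (hy0 x y hp) hsp1 ?_ (dS f (A x y) (B x y))
      (fun γ => dS (dS f) (A x y) (B x y) * pdy A γ x y + dT (dS f) (A x y) (B x y) * pdy B γ x y)
      (fun a => ?_) (fun a γ => ?_) i
    · rintro (a | b) hα i β γ
      · exact absurd ⟨a, rfl⟩ hα
      · exact berwald_lift_out hj hF₂.isOpenW hW hW2 (hF₂.sm_spray b) (hsp2 b) _ _ _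
          (Or.inl (hn1 i)) x y hp
    · rw [hpdG, hB0 a x y hp, hA1, mul_zero, add_zero]
      rfl
    · rw [fundTensor_eq, hfund, hB0 a x y hp, hz _ (hB0 a), hA1]
      simp only [liftF]
      ring
  · refine block_J hF hF₂ hj hW hW2 hp (hU x y hp) (hy0 x y hp) hsp2 ?_ (dT f (A x y) (B x y))
      (fun γ => dS (dT f) (A x y) (B x y) * pdy A γ x y + dT (dT f) (A x y) (B x y) * pdy B γ x y)
      (fun a => ?_) (fun a γ => ?_) i
    · rintro (a | b) hα i β γ
      · exact berwald_lift_out hi hF₁.isOpenW hW hW1 (hF₁.sm_spray a) (hsp1 a) _ _ _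
          (Or.inl (hn2 i)) x y hp
      · exact absurd ⟨b, rfl⟩ hα
    · rw [hpdG, hA0 a x y hp, hB1, mul_zero, zero_add]
      rfl
    · rw [fundTensor_eq, hfund, hA0 a x y hp, hz _ (hA0 a), hB1]
      simp only [liftF]
      ring
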